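/- arXiv:2511.21418 — 2 statements merged into one kernel-verified Lean document; each statement's English description precedes it below -/
import Mathlib

section
/- There is an absolute constant C > 0 such that for every integer n ≥ 2 and every ε ∈ (0, 1/2), the following holds: if H ∈ ℝ^{n×n} is a positive semidefinite Hankel matrix of the form H = V_X D_X V_X^T for a finite set X ⊂ ℝ with |x| ≤ 1 for all x ∈ X and positive weights (a_x)_{x∈X}, then there exists a Hankel matrix Ĥ ∈ ℝ^{n×n} of rank at most C·(ln n)·ln(1/ε) with ‖H − Ĥ‖₂ ≤ ε‖H‖₂ and ‖H − Ĥ‖_F ≤ ε‖H‖_F. -/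
open scoped BigOperators

/-- A matrix is Hankel if its entries depend only on the sum of the indices. -/
def IsHankel {n : ℕ} (A : Matrix (Fin n) (Fin n) ℝ) : Prop :=
  ∀ i j k l : Fin n, (i : ℕ) + (j : ℕ) = (k : ℕ) + (l : ℕ) → A i j = A k l

/-- Euclidean (ℓ₂) norm of a vector. -/
noncomputable def euclNorm {n : ℕ} (x : Fin n → ℝ) : ℝ := Real.sqrt (∑ i, x i ^ 2)

/-- Spectral norm of a matrix: supremum of ‖Ax‖₂ over the Euclidean unit ball. -/
noncomputable def specNorm {n : ℕ} (A : Matrix (Fin n) (Fin n) ℝ) : ℝ :=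
  ⨆ x : {x : Fin n → ℝ // euclNorm x ≤ 1}, euclNorm (A.mulVec x.1)

/-- Frobenius norm of a matrix. -/
noncomputable def froNorm {n : ℕ} (A : Matrix (Fin n) (Fin n) ℝ) : ℝ :=
  Real.sqrt (∑ i, ∑ j, (A i j) ^ 2)

/-- The Vandermonde matrix `V_X ∈ ℝ^{n×|X|}` whose columns are the moment vectors
`v_n(x) = (1, x, …, x^{n−1})ᵀ` for `x ∈ X`. -/
noncomputable def vandermondeX (n : ℕ) (X : Finset ℝ) : Matrix (Fin n) X ℝ :=
  Matrix.of fun (i : Fin n) (x : X) => (x : ℝ) ^ (i : ℕ)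

/-- The product `V_X D_X V_Xᵀ` where `D_X = diag((a_x)_{x∈X})`. -/
noncomputable def vdvT (n : ℕ) (X : Finset ℝ) (a : ℝ → ℝ) : Matrix (Fin n) (Fin n) ℝ :=
  vandermondeX n X * Matrix.diagonal (fun x : X => a (x : ℝ)) * (vandermondeX n X).transpose


open scoped Classical

/-- Log-scale bucketing of a set of nodes `X ⊂ [−1,1]∖{0}`:
`B₀ = {x : ln(1/|x|) ∈ [0, λ/n]}`, `B_r = {x : ln(1/|x|) ∈ (2^{r−1}λ/n, 2^r λ/n]}` for
`1 ≤ r ≤ R`, and `B_{R+1} = {x : ln(1/|x|) > 2^R λ/n}`. -/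
noncomputable def bucket (X : Finset ℝ) (lam : ℝ) (n R r : ℕ) : Finset ℝ :=
  if r = 0 then
    X.filter (fun x => 0 ≤ Real.log (1 / |x|) ∧ Real.log (1 / |x|) ≤ lam / n)
  else if r ≤ R then
    X.filter (fun x =>
      (2 : ℝ) ^ (r - 1) * lam / n < Real.log (1 / |x|) ∧
        Real.log (1 / |x|) ≤ (2 : ℝ) ^ r * lam / n)
  else
    X.filter (fun x => (2 : ℝ) ^ R * lam / n < Real.log (1 / |x|))

lemma fiber_card {n : ℕ} (φ : Fin n → Fin n) (hφ : ∀ i, (φ i : ℕ) = 2 * ((i : ℕ) / 8)) (p : Fin n) :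
    (Finset.univ.filter (fun i => φ i = p)).card ≤ 8 := by
  have : (Finset.univ.filter (fun i => φ i = p)).card ≤ (Finset.range 8).card := by
    apply Finset.card_le_card_of_injOn (fun i : Fin n => (i : ℕ) % 8)
    · intro i _
      simp only [Finset.coe_range, Set.mem_Iio]
      omega
    · intro i hi j hj hij
      simp only [Finset.coe_filter, Finset.mem_univ, true_and, Set.mem_ofPred_eq] at hi hj
      have h1 := hφ i
      have h2 := hφ j
      rw [hi] at h1
      rw [hj] at h2
      simp only at hij
      apply Fin.ext
      omega
  simpa using this

lemma sum_comp_le {n : ℕ} (φ : Fin n → Fin n) (hφ : ∀ i, (φ i : ℕ) = 2 * ((i : ℕ) / 8))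
    (f : Fin n → ℝ) (hf : ∀ i, 0 ≤ f i) : ∑ i, f (φ i) ≤ 8 * ∑ i, f i := by
  rw [← Finset.sum_fiberwise (s := Finset.univ) (g := φ), Finset.mul_sum]
  apply Finset.sum_le_sum
  intro p _
  have : ∑ i ∈ Finset.univ.filter (fun i => φ i = p), f (φ i)
      = ∑ i ∈ Finset.univ.filter (fun i => φ i = p), f p := by
    apply Finset.sum_congr rfl
    intro i hi
    rw [(Finset.mem_filter.mp hi).2]
  rw [this, Finset.sum_const, nsmul_eq_mul]
  apply mul_le_mul_of_nonneg_right _ (hf p)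
  exact_mod_cast fiber_card φ hφ p

lemma euclNorm_sq {n : ℕ} (x : Fin n → ℝ) : euclNorm x ^ 2 = ∑ i, x i ^ 2 :=
  Real.sq_sqrt (Finset.sum_nonneg fun i _ => sq_nonneg _)

lemma euclNorm_nonneg {n : ℕ} (x : Fin n → ℝ) : 0 ≤ euclNorm x := Real.sqrt_nonneg _

lemma euclNorm_smul {n : ℕ} (c : ℝ) (hc : 0 ≤ c) (x : Fin n → ℝ) :
    euclNorm (c • x) = c * euclNorm x := by
  unfold euclNorm
  have : ∑ i, (c • x) i ^ 2 = c ^ 2 * ∑ i, x i ^ 2 := by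
    rw [Finset.mul_sum]
    apply Finset.sum_congr rfl
    intro i _
    simp only [Pi.smul_apply, smul_eq_mul]
    ring
  rw [this, Real.sqrt_mul (sq_nonneg c), Real.sqrt_sq hc]

lemma mulVec_fro {n : ℕ} (A : Matrix (Fin n) (Fin n) ℝ) (x : Fin n → ℝ) :
    euclNorm (A.mulVec x) ^ 2 ≤ (∑ i, ∑ j, (A i j) ^ 2) * euclNorm x ^ 2 := by
  rw [euclNorm_sq, euclNorm_sq, Finset.sum_mul]
  apply Finset.sum_le_sum
  intro i _
  exact Finset.sum_mul_sq_le_sq_mul_sq Finset.univ (fun j => A i j) x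

lemma specBdd {n : ℕ} (A : Matrix (Fin n) (Fin n) ℝ) :
    BddAbove (Set.range fun x : {x : Fin n → ℝ // euclNorm x ≤ 1} => euclNorm (A.mulVec x.1)) := by
  refine ⟨froNorm A, ?_⟩
  rintro _ ⟨⟨x, hx⟩, rfl⟩
  apply Real.le_sqrt_of_sq_le
  refine (mulVec_fro A x).trans ?_
  have h0 : 0 ≤ ∑ i, ∑ j, (A i j) ^ 2 :=
    Finset.sum_nonneg fun i _ => Finset.sum_nonneg fun j _ => sq_nonneg _
  have h1 : euclNorm x ^ 2 ≤ 1 := pow_le_one₀ (euclNorm_nonneg x) hx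
  nlinarith

lemma specNorm_nonneg {n : ℕ} (A : Matrix (Fin n) (Fin n) ℝ) : 0 ≤ specNorm A :=
  Real.iSup_nonneg fun _ => euclNorm_nonneg _

lemma mulVec_spec {n : ℕ} (A : Matrix (Fin n) (Fin n) ℝ) (x : Fin n → ℝ) :
    euclNorm (A.mulVec x) ≤ specNorm A * euclNorm x := by
  rcases (euclNorm_nonneg x).eq_or_lt with h | h
  · have := mulVec_fro A x
    rw [← h] at this ⊢
    have h2 := euclNorm_nonneg (A.mulVec x)
    nlinarith
  · have h1 : euclNorm ((euclNorm x)⁻¹ • x) ≤ 1 := by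
      rw [euclNorm_smul _ (by positivity), inv_mul_cancel₀ h.ne']
    have h2 : euclNorm (A.mulVec ((euclNorm x)⁻¹ • x)) ≤ specNorm A :=
      le_ciSup (specBdd A) ⟨_, h1⟩
    rw [Matrix.mulVec_smul, euclNorm_smul _ (by positivity), inv_mul_le_iff₀ h] at h2
    linarith

lemma fro_bound {n : ℕ} (E H : Matrix (Fin n) (Fin n) ℝ) (φ : Fin n → Fin n)
    (hφ : ∀ i, (φ i : ℕ) = 2 * ((i : ℕ) / 8)) (δ : ℝ) (hδ : 0 ≤ δ)
    (hE : ∀ i j, |E i j| ≤ δ * H (φ i) (φ j)) : froNorm E ≤ 8 * δ * froNorm H := by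
  have key : ∑ i, ∑ j, (E i j) ^ 2 ≤ (8 * δ) ^ 2 * ∑ i, ∑ j, (H i j) ^ 2 := by
    calc ∑ i, ∑ j, (E i j) ^ 2 ≤ ∑ i, ∑ j, δ ^ 2 * (H (φ i) (φ j)) ^ 2 := by
          apply Finset.sum_le_sum; intro i _
          apply Finset.sum_le_sum; intro j _
          rw [← mul_pow, ← sq_abs]
          exact pow_le_pow_left₀ (abs_nonneg _) (hE i j) 2
      _ ≤ ∑ i, δ ^ 2 * (8 * ∑ j, (H (φ i) j) ^ 2) := by
          apply Finset.sum_le_sum; intro i _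
          rw [← Finset.mul_sum]
          apply mul_le_mul_of_nonneg_left _ (sq_nonneg _)
          exact sum_comp_le φ hφ (fun j => (H (φ i) j) ^ 2) (fun _ => sq_nonneg _)
      _ = δ ^ 2 * 8 * ∑ i, (fun p => ∑ j, (H p j) ^ 2) (φ i) := by
          rw [Finset.mul_sum]
          apply Finset.sum_congr rfl; intro i _; ring
      _ ≤ δ ^ 2 * 8 * (8 * ∑ i, ∑ j, (H i j) ^ 2) := by
          apply mul_le_mul_of_nonneg_left _ (by positivity)
          exact sum_comp_le φ hφ _ (fun _ => Finset.sum_nonneg fun _ _ => sq_nonneg _)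
      _ = _ := by ring
  unfold froNorm
  calc _ ≤ _ := Real.sqrt_le_sqrt key
    _ = _ := by rw [Real.sqrt_mul (sq_nonneg _), Real.sqrt_sq (by positivity)]

lemma spec_bound {n : ℕ} (E H : Matrix (Fin n) (Fin n) ℝ) (φ : Fin n → Fin n)
    (hφ : ∀ i, (φ i : ℕ) = 2 * ((i : ℕ) / 8)) (δ : ℝ) (hδ : 0 ≤ δ)
    (hE : ∀ i j, |E i j| ≤ δ * H (φ i) (φ j)) : specNorm E ≤ 8 * δ * specNorm H := by
  have hs := specNorm_nonneg H
  apply Real.iSup_le _ (by positivity)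
  rintro ⟨x, hx⟩
  let z : Fin n → ℝ := fun p => ∑ j ∈ Finset.univ.filter (fun j => φ j = p), |x j|
  have hz : euclNorm z ^ 2 ≤ 8 := by
    rw [euclNorm_sq]
    calc ∑ p, z p ^ 2 ≤ ∑ p, 8 * ∑ j ∈ Finset.univ.filter (fun j => φ j = p), |x j| ^ 2 := by
          apply Finset.sum_le_sum; intro p _
          refine (sq_sum_le_card_mul_sum_sq).trans ?_
          apply mul_le_mul_of_nonneg_right _ (Finset.sum_nonneg fun _ _ => sq_nonneg _)
          exact_mod_cast fiber_card φ hφ p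
      _ = 8 * ∑ j, |x j| ^ 2 := by
          rw [← Finset.mul_sum, Finset.sum_fiberwise]
      _ = 8 * euclNorm x ^ 2 := by
          rw [euclNorm_sq]; simp only [sq_abs]
      _ ≤ 8 := by
          have h1 : euclNorm x ^ 2 ≤ 1 := pow_le_one₀ (euclNorm_nonneg x) hx
          linarith
  have hi : ∀ i, |E.mulVec x i| ≤ δ * H.mulVec z (φ i) := by
    intro i
    have h1 : H.mulVec z (φ i) = ∑ j, H (φ i) (φ j) * |x j| := by
      show ∑ p, H (φ i) p * z p = _
      rw [← Finset.sum_fiberwise (s := Finset.univ) (g := φ) (f := fun j => H (φ i) (φ j) * |x j|)]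
      apply Finset.sum_congr rfl; intro p _
      rw [Finset.mul_sum]
      apply Finset.sum_congr rfl; intro j hj
      rw [(Finset.mem_filter.mp hj).2]
    rw [h1, Finset.mul_sum]
    refine (Finset.abs_sum_le_sum_abs (fun j => E i j * x j) Finset.univ).trans ?_
    apply Finset.sum_le_sum; intro j _
    rw [abs_mul, ← mul_assoc]
    exact mul_le_mul_of_nonneg_right (hE i j) (abs_nonneg _)
  have h1 : euclNorm (E.mulVec x) ^ 2 ≤ (8 * δ * specNorm H) ^ 2 := by
    calc euclNorm (E.mulVec x) ^ 2 = ∑ i, (E.mulVec x i) ^ 2 := euclNorm_sq _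
      _ ≤ ∑ i, δ ^ 2 * (fun p => (H.mulVec z p) ^ 2) (φ i) := by
          apply Finset.sum_le_sum; intro i _
          show _ ≤ δ ^ 2 * (H.mulVec z (φ i)) ^ 2
          rw [← mul_pow, ← sq_abs]
          exact pow_le_pow_left₀ (abs_nonneg _) (hi i) 2
      _ ≤ δ ^ 2 * (8 * ∑ i, (H.mulVec z i) ^ 2) := by
          rw [← Finset.mul_sum]
          apply mul_le_mul_of_nonneg_left _ (sq_nonneg _)
          exact sum_comp_le φ hφ _ (fun _ => sq_nonneg _)
      _ = δ ^ 2 * 8 * euclNorm (H.mulVec z) ^ 2 := by rw [euclNorm_sq]; ring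
      _ ≤ δ ^ 2 * 8 * (specNorm H * euclNorm z) ^ 2 := by
          apply mul_le_mul_of_nonneg_left _ (by positivity)
          exact pow_le_pow_left₀ (euclNorm_nonneg _) (mulVec_spec H z) 2
      _ = δ ^ 2 * 8 * specNorm H ^ 2 * euclNorm z ^ 2 := by ring
      _ ≤ δ ^ 2 * 8 * specNorm H ^ 2 * 8 := mul_le_mul_of_nonneg_left hz (by positivity)
      _ = _ := by ring
  exact le_of_sq_le_sq h1 (by positivity)

/-- Taylor remainder. -/
lemma taylor_rem (z : ℝ) (s : ℕ) :
    |Real.exp z - ∑ j ∈ Finset.range s, z ^ j / j.factorial| ≤ (1 / 2) ^ s * Real.exp (2 * |z|) := by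
  have h1 := Complex.norm_exp_sub_sum_le_exp_norm_sub_sum (z : ℂ) s
  have e1 : Complex.exp (z : ℂ) - ∑ m ∈ Finset.range s, (z : ℂ) ^ m / m.factorial
      = ((Real.exp z - ∑ j ∈ Finset.range s, z ^ j / j.factorial : ℝ) : ℂ) := by
    push_cast; rfl
  rw [e1, Complex.norm_real, Complex.norm_real, Real.norm_eq_abs, Real.norm_eq_abs] at h1
  refine h1.trans ?_
  have hw : 0 ≤ |z| := abs_nonneg z
  generalize |z| = w at *
  have t1 : ∀ v : ℝ, (∑ j ∈ Finset.range s, v ^ j / j.factorial)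
      + ∑' j : ℕ, v ^ (j + s) / (j + s).factorial = Real.exp v := by
    intro v
    have h2 := (Real.summable_pow_div_factorial v).sum_add_tsum_nat_add s
    rw [h2, Real.exp_eq_exp_ℝ]
    exact (NormedSpace.expSeries_div_hasSum_exp v).tsum_eq
  have sm : ∀ v : ℝ, Summable (fun j : ℕ => v ^ (j + s) / ((j + s).factorial : ℝ)) := fun v =>
    (summable_nat_add_iff s).2 (Real.summable_pow_div_factorial v)
  have h3 : ∑' j : ℕ, w ^ (j + s) / ((j + s).factorial : ℝ)
      ≤ ∑' j : ℕ, (1 / 2) ^ s * ((2 * w) ^ (j + s) / ((j + s).factorial : ℝ)) := by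
    apply Summable.tsum_le_tsum _ (sm w) ((sm (2 * w)).mul_left _)
    intro j
    rw [mul_div_assoc']
    apply div_le_div_of_nonneg_right _ (by positivity)
    have e : (1 / 2 : ℝ) ^ s * (2 * w) ^ (j + s) = 2 ^ j * w ^ (j + s) := by
      rw [mul_pow, pow_add 2 j s, div_pow, one_pow]
      field_simp
    rw [e]
    have : (1 : ℝ) ≤ 2 ^ j := one_le_pow₀ (by norm_num)
    have := pow_nonneg hw (j + s)
    nlinarith
  rw [tsum_mul_left] at h3
  have h4 := t1 w
  have h5 := t1 (2 * w)
  have h6 : 0 ≤ ∑ j ∈ Finset.range s, (2 * w) ^ j / (j.factorial : ℝ) :=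
    Finset.sum_nonneg fun _ _ => by positivity
  have h7 : (0 : ℝ) < (1 / 2) ^ s := by positivity
  nlinarith

lemma shift_mem {n : ℕ} (W : Submodule ℝ (Fin n → ℝ)) (y : ℝ) (s : ℕ)
    (hW : ∀ j < s, (fun i : Fin n => y ^ (i : ℕ) * ((i : ℕ) : ℝ) ^ j) ∈ W) (d : ℝ) (l : ℕ) :
    (fun i : Fin n => y ^ ((i : ℕ) + l) *
      ∑ j ∈ Finset.range s, ((((i : ℕ) + l : ℕ) : ℝ) * d) ^ j / j.factorial) ∈ W := by
  have : (fun i : Fin n => y ^ ((i : ℕ) + l) *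
      ∑ j ∈ Finset.range s, ((((i : ℕ) + l : ℕ) : ℝ) * d) ^ j / j.factorial)
    = ∑ j ∈ Finset.range s, ∑ m ∈ Finset.range (j + 1),
      (y ^ l * d ^ j / j.factorial * (l : ℝ) ^ (j - m) * (j.choose m)) •
        (fun i : Fin n => y ^ (i : ℕ) * ((i : ℕ) : ℝ) ^ m) := by
    ext i
    simp only [Finset.sum_apply, Pi.smul_apply, smul_eq_mul]
    rw [Finset.mul_sum]
    apply Finset.sum_congr rfl; intro j _
    rw [mul_pow, Nat.cast_add, add_pow, Finset.sum_mul, Finset.sum_div, Finset.mul_sum]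
    apply Finset.sum_congr rfl; intro m _
    rw [pow_add]
    ring
  rw [this]
  refine Submodule.sum_mem _ fun j hj => Submodule.sum_mem _ fun m hm => Submodule.smul_mem _ _ ?_
  apply hW
  simp only [Finset.mem_range] at hj hm
  omega

/-- Centers of the buckets. -/
noncomputable def cf (n r : ℕ) : ℝ := if r = 0 then 0 else 3 / 2 * (2 ^ (r - 1) / n)

lemma center_exists (n : ℕ) (hn : 2 ≤ n) (t : ℝ) (ht0 : 0 ≤ t) (ht1 : t ≤ 1) :
    ∃ r : Fin (Nat.log 2 n + 2), (cf n r = 0 ∧ t ≤ 1 / n) ∨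
      ∃ T : ℝ, 0 < T ∧ cf n r = 3 / 2 * T ∧ T ≤ t ∧ t ≤ 2 * T := by
  have hn0 : (0 : ℝ) < n := by positivity
  by_cases h : t ≤ 1 / n
  · exact ⟨0, Or.inl ⟨by simp [cf], h⟩⟩
  · push Not at h
    have h1 : 1 ≤ t * n := by
      rw [div_lt_iff₀ hn0] at h
      exact h.le
    obtain ⟨r, hr1, hr2⟩ := exists_nat_pow_near h1 (one_lt_two : (1 : ℝ) < 2)
    have hr : r ≤ Nat.log 2 n := by
      apply Nat.le_log_of_pow_le one_lt_two
      have : (2 : ℝ) ^ r ≤ n := by nlinarith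
      exact_mod_cast this
    refine ⟨⟨r + 1, by omega⟩, Or.inr ⟨2 ^ r / n, by positivity, by simp [cf], ?_, ?_⟩⟩
    · rwa [div_le_iff₀ hn0]
    · rw [mul_div_assoc', le_div_iff₀ hn0, ← pow_succ']
      exact hr2.le

lemma approx (n : ℕ) (hn : 2 ≤ n) (t c : ℝ) (ht0 : 0 ≤ t)
    (hc : (c = 0 ∧ t ≤ 1 / n) ∨ ∃ T : ℝ, 0 < T ∧ c = 3 / 2 * T ∧ T ≤ t ∧ t ≤ 2 * T)
    (s k m : ℕ) (hk : k ≤ 2 * n) (hm : 4 * m ≤ k) :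
    |Real.exp (-(k * t)) - Real.exp (-(k * c)) *
      ∑ j ∈ Finset.range s, ((k : ℝ) * (c - t)) ^ j / j.factorial|
      ≤ 256 * (1 / 2) ^ s * Real.exp (-(m * t)) := by
  have hn0 : (0 : ℝ) < n := by positivity
  have hk' : (k : ℝ) ≤ 2 * n := by exact_mod_cast hk
  have hm' : 4 * (m : ℝ) ≤ k := by exact_mod_cast hm
  have hm0 : (0 : ℝ) ≤ m := by positivity
  have hk0 : (0 : ℝ) ≤ k := by positivity
  have e1 : Real.exp (-(k * t)) = Real.exp (-(k * c)) * Real.exp (k * (c - t)) := by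
    rw [← Real.exp_add]; congr 1; ring
  rw [e1, ← mul_sub, abs_mul, abs_of_pos (Real.exp_pos _)]
  have h1 := taylor_rem (k * (c - t)) s
  have h2 : Real.exp (-(k * c)) * Real.exp (2 * |(k : ℝ) * (c - t)|)
      ≤ 256 * Real.exp (-(m * t)) := by
    have h256 : Real.exp 5 ≤ 256 := by
      have e5 : Real.exp 5 = Real.exp 1 ^ 5 := by
        rw [← Real.exp_nat_mul]; norm_num
      rw [e5]
      have : Real.exp 1 ≤ 3 := by linarith [Real.exp_one_lt_d9]
      calc Real.exp 1 ^ 5 ≤ 3 ^ 5 := pow_le_pow_left₀ (Real.exp_pos 1).le this 5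
        _ ≤ 256 := by norm_num
    calc _ = Real.exp (-(k * c) + 2 * |(k : ℝ) * (c - t)|) := by rw [Real.exp_add]
      _ ≤ Real.exp (5 + -(m * t)) := by
          apply Real.exp_le_exp.2
          rw [abs_mul, abs_of_nonneg hk0]
          rcases hc with ⟨hc, htn⟩ | ⟨T, hT, hc, h3, h4⟩
          · subst hc
            rw [zero_sub, abs_neg, abs_of_nonneg ht0]
            rw [le_div_iff₀ hn0] at htn
            have : (k : ℝ) * t ≤ 2 := by nlinarith
            have : (m : ℝ) * t ≤ 1 / 2 := by nlinarith
            linarith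
          · have h5 : |c - t| ≤ T / 2 := by
              rw [abs_le]; constructor <;> linarith
            have h6 : (k : ℝ) * |c - t| ≤ k * (T / 2) := mul_le_mul_of_nonneg_left h5 hk0
            have h7 : (m : ℝ) * t ≤ m * (2 * T) := mul_le_mul_of_nonneg_left h4 hm0
            have h8 : 4 * (m : ℝ) * T ≤ k * T := mul_le_mul_of_nonneg_right hm' hT.le
            rw [hc] at *
            linarith
      _ = Real.exp 5 * Real.exp (-(m * t)) := Real.exp_add _ _
      _ ≤ _ := mul_le_mul_of_nonneg_right h256 (Real.exp_pos _).le
  calc _ ≤ Real.exp (-(k * c)) * ((1 / 2) ^ s * Real.exp (2 * |(k : ℝ) * (c - t)|)) :=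
        mul_le_mul_of_nonneg_left h1 (Real.exp_pos _).le
    _ = (1 / 2) ^ s * (Real.exp (-(k * c)) * Real.exp (2 * |(k : ℝ) * (c - t)|)) := by ring
    _ ≤ (1 / 2) ^ s * (256 * Real.exp (-(m * t))) :=
        mul_le_mul_of_nonneg_left h2 (by positivity)
    _ = _ := by ring

/-- The spanning vectors. -/
noncomputable def bas (n s : ℕ) :
    (Fin s × Fin (Nat.log 2 n + 2) × Bool) ⊕ Fin (2 * s) → (Fin n → ℝ)
  | Sum.inl (j, r, σ) => fun i =>
      ((if σ then 1 else -1) * Real.exp (-(cf n r))) ^ (i : ℕ) * ((i : ℕ) : ℝ) ^ (j : ℕ)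
  | Sum.inr k => fun i => if (i : ℕ) = k then 1 else 0

lemma node_approx (n s : ℕ) (hn : 2 ≤ n) (x : ℝ) (hx : |x| ≤ 1) :
    ∃ g : ℕ → ℝ,
      (∀ l : ℕ, (fun i : Fin n => g ((i : ℕ) + l)) ∈ Submodule.span ℝ (Set.range (bas n s))) ∧
      ∀ k m : ℕ, k ≤ 2 * n → 4 * m ≤ k → |x ^ k - g k| ≤ 256 * (1 / 2) ^ s * |x| ^ m := by
  by_cases hx2 : |x| ≤ 1 / 2
  · refine ⟨fun k => if k < 2 * s then x ^ k else 0, ?_, ?_⟩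
    · intro l
      have : (fun i : Fin n => if (i : ℕ) + l < 2 * s then x ^ ((i : ℕ) + l) else 0)
          = ∑ q : Fin (2 * s), (if (q : ℕ) + l < 2 * s then x ^ ((q : ℕ) + l) else 0) •
            bas n s (Sum.inr q) := by
        ext i
        simp only [Finset.sum_apply, Pi.smul_apply, smul_eq_mul, bas]
        by_cases hi : (i : ℕ) < 2 * s
        · rw [Finset.sum_eq_single (⟨i, hi⟩ : Fin (2 * s))]
          · simp
          · intro q _ hq
            have : (i : ℕ) ≠ q := fun h => hq (Fin.ext h.symm)
            simp [this]
          · simp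
        · rw [Finset.sum_eq_zero, if_neg (by omega)]
          intro q _
          have : (i : ℕ) ≠ q := by omega
          simp [this]
      simp only
      rw [this]
      exact Submodule.sum_mem _ fun q _ => Submodule.smul_mem _ _
        (Submodule.subset_span ⟨_, rfl⟩)
    · intro k m _ hm
      by_cases hk : k < 2 * s
      · simp only [hk, if_true, sub_self, abs_zero]
        positivity
      · simp only [hk, if_false, sub_zero]
        rw [abs_pow]
        have : k = (k - m) + m := by omega
        rw [this, pow_add]
        apply mul_le_mul_of_nonneg_right _ (by positivity)
        calc |x| ^ (k - m) ≤ (1 / 2) ^ (k - m) := pow_le_pow_left₀ (abs_nonneg _) hx2 _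
          _ ≤ (1 / 2) ^ s := pow_le_pow_of_le_one (by norm_num) (by norm_num) (by omega)
          _ ≤ 256 * (1 / 2) ^ s := by
            have : (0 : ℝ) < (1 / 2) ^ s := by positivity
            linarith
  · push Not at hx2
    have hx0 : 0 < |x| := by linarith
    set t := -Real.log |x| with ht
    have hxt : |x| = Real.exp (-t) := by rw [ht, neg_neg, Real.exp_log hx0]
    have ht0 : 0 ≤ t := by
      have := Real.log_nonpos hx0.le hx
      linarith
    have ht1 : t ≤ 1 := by
      have h1 : Real.log (1 / 2) < Real.log |x| := Real.log_lt_log (by norm_num) hx2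
      rw [one_div, Real.log_inv] at h1
      have := Real.log_two_lt_d9
      linarith
    obtain ⟨r, hr⟩ := center_exists n hn t ht0 ht1
    obtain ⟨σ, hσ⟩ : ∃ σ : Bool, x = (if σ then 1 else -1) * |x| := by
      rcases le_total 0 x with h | h
      · exact ⟨true, by simp [abs_of_nonneg h]⟩
      · exact ⟨false, by simp [abs_of_nonpos h]⟩
    refine ⟨fun k => ((if σ then 1 else -1) * Real.exp (-(cf n r))) ^ k *
      ∑ j ∈ Finset.range s, ((k : ℝ) * (cf n r - t)) ^ j / j.factorial, ?_, ?_⟩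
    · intro l
      apply shift_mem
      intro j hj
      exact Submodule.subset_span ⟨Sum.inl (⟨j, hj⟩, r, σ), rfl⟩
    · intro k m hk hm
      have h := approx n hn t (cf n r) ht0 hr s k m hk hm
      have e1 : |x| ^ m = Real.exp (-(m * t)) := by
        rw [hxt, ← Real.exp_nat_mul]; congr 1; ring
      have e2 : x ^ k = (if σ then 1 else -1) ^ k * Real.exp (-(k * t)) := by
        rw [hσ, mul_pow, hxt, ← Real.exp_nat_mul]; congr 2; ring
      beta_reduce
      rw [e1, e2, mul_pow, ← Real.exp_nat_mul, mul_assoc, ← mul_sub, abs_mul]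
      have e3 : |(if σ then (1 : ℝ) else -1) ^ k| = 1 := by
        rw [abs_pow]; cases σ <;> simp
      rw [e3, one_mul, mul_neg (k : ℝ) (cf n r)]
      exact h

lemma vdvT_apply (n : ℕ) (X : Finset ℝ) (a : ℝ → ℝ) (i j : Fin n) :
    vdvT n X a i j = ∑ x ∈ X, a x * x ^ ((i : ℕ) + (j : ℕ)) := by
  unfold vdvT
  rw [Matrix.mul_apply, ← Finset.sum_coe_sort X]
  apply Finset.sum_congr rfl
  intro x _
  rw [Matrix.mul_diagonal, Matrix.transpose_apply]
  simp only [vandermondeX, Matrix.of_apply]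
  ring

theorem nodes_le_one_low_rank :
    ∃ C : ℝ, 0 < C ∧
      ∀ (n : ℕ), 2 ≤ n → ∀ ε : ℝ, 0 < ε → ε < 1 / 2 →
        ∀ (X : Finset ℝ) (a : ℝ → ℝ),
          (∀ x ∈ X, |x| ≤ 1) → (∀ x ∈ X, 0 < a x) →
          ∀ H : Matrix (Fin n) (Fin n) ℝ, H = vdvT n X a → H.PosSemidef → IsHankel H →
            ∃ Hhat : Matrix (Fin n) (Fin n) ℝ, IsHankel Hhat ∧
              (Hhat.rank : ℝ) ≤ C * Real.log n * Real.log (1 / ε) ∧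
              specNorm (H - Hhat) ≤ ε * specNorm H ∧
              froNorm (H - Hhat) ≤ ε * froNorm H := by
  have hl2 : 0 < Real.log 2 := Real.log_pos one_lt_two
  refine ⟨104 / (Real.log 2) ^ 2, by positivity, ?_⟩
  intro n hn ε hε hε2 X a hX ha H hH _ _
  set s : ℕ := ⌈Real.logb 2 (1 / ε)⌉₊ + 11 with hs
  have hδ : 8 * (256 * (1 / 2 : ℝ) ^ s) ≤ ε := by
    have h1 : 1 / ε ≤ 2 ^ ⌈Real.logb 2 (1 / ε)⌉₊ := by
      rw [← Real.rpow_natCast, ← Real.logb_le_iff_le_rpow one_lt_two (by positivity)]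
      exact Nat.le_ceil _
    rw [hs, pow_add, one_div_pow]
    rw [div_le_iff₀ hε] at h1
    have h2 : (1 : ℝ) / 2 ^ ⌈Real.logb 2 (1 / ε)⌉₊ ≤ ε := by
      rw [div_le_iff₀ (by positivity)]; linarith
    norm_num at h2 ⊢
    linarith
  choose! g hg1 hg2 using fun x (hx : x ∈ X) => node_approx n s hn x (hX x hx)
  let φ : Fin n → Fin n := fun i => ⟨2 * ((i : ℕ) / 8), by omega⟩
  have hφ : ∀ i, (φ i : ℕ) = 2 * ((i : ℕ) / 8) := fun i => rfl
  let Hh : Matrix (Fin n) (Fin n) ℝ := Matrix.of fun i j => ∑ x ∈ X, a x * g x ((i : ℕ) + (j : ℕ))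
  have hE : ∀ i j, |(H - Hh) i j| ≤ 256 * (1 / 2) ^ s * H (φ i) (φ j) := by
    intro i j
    rw [Matrix.sub_apply, hH, vdvT_apply, vdvT_apply]
    show |_ - ∑ x ∈ X, a x * g x ((i : ℕ) + (j : ℕ))| ≤ _
    rw [← Finset.sum_sub_distrib, Finset.mul_sum]
    refine (Finset.abs_sum_le_sum_abs _ _).trans ?_
    apply Finset.sum_le_sum
    intro x hx
    have hi := i.2
    have hj := j.2
    have h := hg2 x hx ((i : ℕ) + j) (φ i + φ j) (by omega) (by rw [hφ, hφ]; omega)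
    have e : |x| ^ ((φ i : ℕ) + φ j) = x ^ ((φ i : ℕ) + φ j) := by
      apply Even.pow_abs
      rw [hφ, hφ, ← mul_add]
      exact even_two_mul _
    rw [e] at h
    rw [← mul_sub, abs_mul, abs_of_pos (ha x hx)]
    have := mul_le_mul_of_nonneg_left h (ha x hx).le
    linarith
  refine ⟨Hh, ?_, ?_, ?_, ?_⟩
  · intro i j k l h
    simp only [Hh, Matrix.of_apply, h]
  · have h1 : Hh.rank ≤ s * ((Nat.log 2 n + 2) * 2) + 2 * s := by
      rw [Matrix.rank_eq_finrank_span_cols]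
      have h2 : Submodule.span ℝ (Set.range Hh.col) ≤ Submodule.span ℝ (Set.range (bas n s)) := by
        rw [Submodule.span_le]
        rintro _ ⟨l, rfl⟩
        have : Hh.col l = ∑ x ∈ X, a x • (fun i : Fin n => g x ((i : ℕ) + l)) := by
          ext i
          simp [Hh, Matrix.col]
        rw [this]
        exact Submodule.sum_mem _ fun x hx => Submodule.smul_mem _ _ (hg1 x hx l)
      refine (Submodule.finrank_mono h2).trans ((finrank_range_le_card (R := ℝ) (bas n s)).trans ?_)
      simp
    have hL1 : 1 ≤ Nat.log 2 n := Nat.le_log_of_pow_le one_lt_two (by simpa using hn)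
    have hL : (Nat.log 2 n : ℝ) * Real.log 2 ≤ Real.log n := by
      rw [← Real.log_pow]
      apply Real.log_le_log (by positivity)
      exact_mod_cast Nat.pow_log_le_self 2 (by omega)
    have hlε : Real.log 2 ≤ Real.log (1 / ε) := by
      apply Real.log_le_log (by norm_num)
      rw [le_div_iff₀ hε]; linarith
    have hsb : (s : ℝ) * Real.log 2 ≤ 13 * Real.log (1 / ε) := by
      have h3 : (⌈Real.logb 2 (1 / ε)⌉₊ : ℝ) < Real.logb 2 (1 / ε) + 1 := by
        apply Nat.ceil_lt_add_one
        unfold Real.logb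
        apply div_nonneg <;> linarith
      have h4 : Real.logb 2 (1 / ε) * Real.log 2 = Real.log (1 / ε) := by
        unfold Real.logb
        field_simp
      rw [hs]
      push_cast
      nlinarith
    have h5 : (Hh.rank : ℝ) ≤ 8 * s * (Nat.log 2 n : ℝ) := by
      have : Hh.rank ≤ 8 * s * Nat.log 2 n := h1.trans (by nlinarith)
      exact_mod_cast this
    have h6 : ((s : ℝ) * Real.log 2) * ((Nat.log 2 n : ℝ) * Real.log 2)
        ≤ (13 * Real.log (1 / ε)) * Real.log n := by
      apply mul_le_mul hsb hL (by positivity)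
      linarith
    refine h5.trans ?_
    rw [div_mul_eq_mul_div, div_mul_eq_mul_div, le_div_iff₀ (by positivity)]
    linarith
  · refine (spec_bound _ H φ hφ _ (by positivity) hE).trans ?_
    exact mul_le_mul_of_nonneg_right hδ (specNorm_nonneg H)
  · refine (fro_bound _ H φ hφ _ (by positivity) hE).trans ?_
    exact mul_le_mul_of_nonneg_right hδ (Real.sqrt_nonneg _)
end

section
/- There exist absolute constants C, C' > 0 such that for every integer n ≥ 2 and every ε ∈ (0, 1/2) there is a finite set T ⊂ ℝ with |T| ≤ C·(ln n)·ln(1/ε), depending only on n and ε, with the following universal property. Let V ∈ ℝ^{n×2|T|} be the matrix [V_T ; R·V_T] obtained by concatenating the columns of the Vandermonde matrix V_T with the columns of R·V_T, where R is the reversal matrix. Then for every positive semidefinite Hankel matrix H ∈ ℝ^{n×n} there exist a diagonal matrix D* ∈ ℝ^{2|T|×2|T|} and a Hankel matrix H* ∈ ℝ^{n×n} with H*_{i,j} = 0 whenever C'·ln(1/ε) ≤ i+j ≤ 2(n−1) − C'·ln(1/ε), such that ‖V D* V^T + H* − H‖_F ≤ ε‖H‖_F and Σ_i |D*_{i,i}|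 ≤ C·ln(1/ε)·(ln n)·‖H‖_F. -/
open scoped BigOperators

/-- The matrix `V = [V_T ; R·V_T] ∈ ℝ^{n × 2|T|}`: its columns indexed by the left copy of
`T` are the moment vectors `v_n(x)`, and its columns indexed by the right copy are the
reversed moment vectors (the columns of `R·V_T`, i.e. `(R·V_T)_{i,x} = x^{n−1−i}`). -/
noncomputable def bigV (n : ℕ) (T : Finset ℝ) : Matrix (Fin n) (T ⊕ T) ℝ :=
  Matrix.of fun (i : Fin n) =>
    Sum.elim (fun x : T => (x : ℝ) ^ (i : ℕ)) (fun x : T => (x : ℝ) ^ (n - 1 - (i : ℕ)))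

set_option maxHeartbeats 1000000

section
open Matrix

lemma exp_tail (x : ℝ) (m : ℕ) :
    |Real.exp x - ∑ i ∈ Finset.range m, x ^ i / (i.factorial : ℝ)| ≤ (1/8)^m * Real.exp (8 * |x|) := by
  have h1 : HasSum (fun i : ℕ => x ^ i / (i.factorial : ℝ)) (Real.exp x) := by
    have := NormedSpace.expSeries_div_hasSum_exp (𝔸 := ℝ) x
    rwa [← Real.exp_eq_exp_ℝ] at this
  have h2 : HasSum (fun i : ℕ => (8*|x|) ^ i / (i.factorial : ℝ)) (Real.exp (8*|x|)) := by
    have := NormedSpace.expSeries_div_hasSum_exp (𝔸 := ℝ) (8*|x|)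
    rwa [← Real.exp_eq_exp_ℝ] at this
  have h1' := (hasSum_nat_add_iff' m).2 h1
  have h2' := ((hasSum_nat_add_iff' m).2 h2).mul_left ((1/8:ℝ)^m)
  have hle : ‖Real.exp x - ∑ i ∈ Finset.range m, x ^ i / (i.factorial : ℝ)‖ ≤
      (1/8:ℝ)^m * (Real.exp (8 * |x|) - ∑ i ∈ Finset.range m, (8 * |x|) ^ i / (i.factorial : ℝ)) := by
    rw [← h1'.tsum_eq]
    refine tsum_of_norm_bounded h2' (fun i => ?_)
    rw [Real.norm_eq_abs, abs_div, abs_pow, mul_pow, Nat.abs_cast, ← mul_div_assoc]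
    gcongr
    rw [← mul_assoc, pow_add 8, mul_comm (8^i), ← mul_assoc, ← mul_pow]
    norm_num
    have : (1:ℝ) ≤ 8^i := one_le_pow₀ (by norm_num)
    exact le_mul_of_one_le_left (by positivity) this
  rw [Real.norm_eq_abs] at hle
  refine hle.trans ?_
  gcongr
  have : 0 ≤ ∑ i ∈ Finset.range m, (8*|x|) ^ i / (i.factorial : ℝ) :=
    Finset.sum_nonneg (fun i _ => by positivity)
  linarith

/-- Fekete nodes. -/
lemma fekete (m : ℕ) : ∃ v : Fin m → ℝ, (∀ j, 0 ≤ v j ∧ v j ≤ 1) ∧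
    ∀ y : ℝ, 0 ≤ y → y ≤ 1 → ∃ l : Fin m → ℝ, (∀ j, |l j| ≤ 1) ∧
      ∀ i : ℕ, i < m → ∑ j, l j * v j ^ i = y ^ i := by
  have hc : IsCompact (Set.univ.pi (fun _ : Fin m => Set.Icc (0:ℝ) 1)) :=
    isCompact_univ_pi (fun _ => isCompact_Icc)
  have hne : (Set.univ.pi (fun _ : Fin m => Set.Icc (0:ℝ) 1)).Nonempty :=
    ⟨fun _ => 0, fun _ _ => by simp⟩
  have hcont : Continuous (fun v : Fin m → ℝ => |(vandermonde v).det|) := by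
    refine continuous_abs.comp (Continuous.matrix_det ?_)
    refine continuous_matrix (fun i j => ?_)
    simp only [vandermonde_apply]
    fun_prop
  obtain ⟨v, hv, hmax⟩ := hc.exists_isMaxOn hne hcont.continuousOn
  have hpos : 0 < |(vandermonde v).det| := by
    let w : Fin m → ℝ := fun j => (j : ℝ) / m
    have hw : w ∈ Set.univ.pi (fun _ : Fin m => Set.Icc (0:ℝ) 1) := by
      intro j _
      have hj : ((j : ℕ) : ℝ) ≤ m := by exact_mod_cast j.2.le
      exact ⟨by positivity, div_le_one_of_le₀ hj (by positivity)⟩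
    refine lt_of_lt_of_le ?_ (hmax hw)
    rw [abs_pos, det_vandermonde_ne_zero_iff]
    intro i j hij
    have hm : (m : ℝ) ≠ 0 := by
      have := i.pos
      positivity
    simp only [w] at hij
    field_simp at hij
    exact Fin.ext (by exact_mod_cast hij)
  have hdet : (vandermonde v).det ≠ 0 := abs_pos.1 hpos
  refine ⟨v, fun j => hv j trivial, fun y hy0 hy1 => ?_⟩
  refine ⟨fun j => (vandermonde v).det⁻¹ * cramer (vandermonde v)ᵀ (fun k : Fin m => y ^ (k:ℕ)) j,
    fun j => ?_, fun i hi => ?_⟩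
  · have hupd : (vandermonde v).updateRow j (fun k : Fin m => y ^ (k:ℕ))
        = vandermonde (Function.update v j y) := by
      ext a b
      by_cases h : a = j
      · subst h; simp [vandermonde_apply]
      · simp [vandermonde_apply, h]
    beta_reduce
    rw [cramer_transpose_apply, hupd, abs_mul, abs_inv, inv_mul_le_one₀ hpos]
    refine hmax ?_
    intro a _
    by_cases h : a = j
    · subst h; simpa using ⟨hy0, hy1⟩
    · simpa [h] using hv a trivial
  · have := congrFun (mulVec_cramer (vandermonde v)ᵀ (fun k : Fin m => y ^ (k:ℕ))) ⟨i, hi⟩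
    simp only [mulVec, dotProduct, transpose_apply, vandermonde_apply, Pi.smul_apply, det_transpose,
      smul_eq_mul] at this
    have h2 : ∑ j, (vandermonde v).det⁻¹ * cramer (vandermonde v)ᵀ (fun k : Fin m => y ^ (k:ℕ)) j * v j ^ i
      = (vandermonde v).det⁻¹ * ∑ j, v j ^ i * cramer (vandermonde v)ᵀ (fun k : Fin m => y ^ (k:ℕ)) j := by
      rw [Finset.mul_sum]
      exact Finset.sum_congr rfl (fun j _ => by ring)
    rw [h2, this, inv_mul_cancel_left₀ hdet]

/-- approximation at one scale -/
lemma approx_scale (m : ℕ) (v l : Fin m → ℝ) (hv : ∀ j, 0 ≤ v j ∧ v j ≤ 1) (y : ℝ) (hy0 : 0 ≤ y)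
    (hy1 : y ≤ 1) (hl : ∀ j, |l j| ≤ 1) (hli : ∀ i : ℕ, i < m → ∑ j, l j * v j ^ i = y ^ i)
    (a τ : ℝ) (ha : 0 ≤ a) (hτ0 : 0 ≤ τ) (hτ : τ ≤ a / 32 + 1 / 32) :
    |Real.exp (-(a + τ * y)) - ∑ j, l j * Real.exp (-(a + τ * v j))|
      ≤ 2 * (1/4)^m * Real.exp (-(a + τ * y) / 2) := by
  let P : ℝ → ℝ := fun z => ∑ i ∈ Finset.range m, (-(τ * z)) ^ i / (i.factorial : ℝ)
  have hP : ∀ z, 0 ≤ z → z ≤ 1 → |Real.exp (-(τ * z)) - P z| ≤ (1/8)^m * Real.exp (8 * τ) := by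
    intro z h0 h1
    refine (exp_tail (-(τ*z)) m).trans ?_
    rw [abs_neg, abs_of_nonneg (by positivity)]
    gcongr
    nlinarith
  have hPy : P y = ∑ j, l j * P (v j) := by
    simp only [P, Finset.mul_sum]
    rw [Finset.sum_comm]
    refine Finset.sum_congr rfl (fun i hi => ?_)
    have := hli i (Finset.mem_range.1 hi)
    rw [show (-(τ*y))^i = (-τ)^i * y^i by rw [← mul_pow]; ring, ← this, Finset.mul_sum, Finset.sum_div]
    refine Finset.sum_congr rfl (fun j _ => ?_)
    rw [show (-(τ*v j))^i = (-τ)^i * v j^i by rw [← mul_pow]; ring]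
    ring
  have key : Real.exp (-(a + τ * y)) - ∑ j, l j * Real.exp (-(a + τ * v j))
     = Real.exp (-a) * ((Real.exp (-(τ * y)) - P y) - ∑ j, l j * (Real.exp (-(τ * v j)) - P (v j))) := by
    simp only [mul_sub, Finset.sum_sub_distrib]
    rw [← hPy]
    have : ∀ z, Real.exp (-(a + τ * z)) = Real.exp (-a) * Real.exp (-(τ * z)) := by
      intro z; rw [← Real.exp_add]; ring_nf
    simp only [this, Finset.mul_sum]
    have h3 : ∀ j, l j * (Real.exp (-a) * Real.exp (-(τ * v j))) = Real.exp (-a) * (l j * Real.exp (-(τ * v j))) := by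
      intro j; ring
    simp only [h3]
    ring
  rw [key, abs_mul, Real.abs_exp]
  have hS : |∑ j, l j * (Real.exp (-(τ * v j)) - P (v j))| ≤ m * ((1/8)^m * Real.exp (8 * τ)) := by
    refine (Finset.abs_sum_le_sum_abs _ _).trans ?_
    refine (Finset.sum_le_sum (g := fun _ => (1/8)^m * Real.exp (8 * τ)) (fun j _ => ?_)).trans ?_
    · rw [abs_mul]
      calc _ ≤ 1 * ((1/8)^m * Real.exp (8 * τ)) :=
            mul_le_mul (hl j) (hP _ (hv j).1 (hv j).2) (abs_nonneg _) (by norm_num)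
        _ = _ := one_mul _
    · simp
  have hT := (abs_sub (Real.exp (-(τ * y)) - P y) (∑ j, l j * (Real.exp (-(τ * v j)) - P (v j)))).trans
    (add_le_add (hP y hy0 hy1) hS)
  have hm2 : (m : ℝ) + 1 ≤ 2^m := by exact_mod_cast Nat.lt_two_pow_self (n := m)
  have hexp : Real.exp (-a) * Real.exp (8 * τ) ≤ 2 * Real.exp (-(a + τ * y) / 2) := by
    have h2 : Real.exp (1/2) ≤ 2 := by
      have h := Real.exp_one_lt_d9
      have : Real.exp (1/2) ^ 2 = Real.exp 1 := by rw [← Real.exp_nat_mul]; norm_num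
      have h0 := Real.exp_pos (1/2)
      nlinarith
    calc Real.exp (-a) * Real.exp (8 * τ) ≤ Real.exp (1/2) * Real.exp (-(a + τ * y) / 2) := by
          rw [← Real.exp_add, ← Real.exp_add]
          apply Real.exp_le_exp.2
          nlinarith
      _ ≤ _ := by gcongr
  calc _ ≤ Real.exp (-a) * ((1/8)^m * Real.exp (8 * τ) + m * ((1/8)^m * Real.exp (8 * τ))) := by
        gcongr
    _ = (m + 1) * (1/8)^m * (Real.exp (-a) * Real.exp (8 * τ)) := by ring
    _ ≤ 2^m * (1/8)^m * (2 * Real.exp (-(a + τ * y) / 2)) := by gcongr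
    _ = _ := by rw [← mul_pow]; norm_num; ring

open scoped MatrixOrder in
lemma posDef_factor {n : ℕ} (H : Matrix (Fin n) (Fin n) ℝ) (hH : H.PosDef) :
    ∃ B : Matrix (Fin n) (Fin n) ℝ, H = Bᵀ * B ∧ IsUnit B.det := by
  obtain ⟨B, hB⟩ := CStarAlgebra.nonneg_iff_eq_star_mul_self.mp hH.posSemidef.nonneg
  have hB' : H = Bᵀ * B := by
    rw [hB, star_eq_conjTranspose, conjTranspose_eq_transpose_of_trivial]
  refine ⟨B, hB', ?_⟩
  have := hH.det_pos
  rw [hB', det_mul, det_transpose] at this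
  rw [isUnit_iff_ne_zero]
  intro h0
  simp [h0] at this

lemma symm_moments {n : ℕ} (A : Matrix (Fin n) (Fin n) ℝ) (hA : A.IsHermitian) (b : Fin n → ℝ) :
    ∃ (lam w : Fin n → ℝ), (∀ l, 0 ≤ w l) ∧
      ∀ k : ℕ, b ⬝ᵥ ((A ^ k) *ᵥ b) = ∑ l, w l * lam l ^ k := by
  have hs := hA.spectral_theorem
  set U : Matrix (Fin n) (Fin n) ℝ := (hA.eigenvectorUnitary : Matrix (Fin n) (Fin n) ℝ) with hU
  have hpow : ∀ k, A ^ k = U * diagonal (fun l => hA.eigenvalues l ^ k) * Uᵀ := by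
    intro k
    conv_lhs => rw [hs]
    rw [← map_pow, Unitary.conjStarAlgAut_apply, diagonal_pow]
    simp only [star_eq_conjTranspose, conjTranspose_eq_transpose_of_trivial]
    rfl
  refine ⟨hA.eigenvalues, fun l => (Uᵀ *ᵥ b) l ^ 2, fun l => sq_nonneg _, fun k => ?_⟩
  rw [hpow, ← mulVec_mulVec, ← mulVec_mulVec, dotProduct_mulVec, ← mulVec_transpose]
  simp only [dotProduct, mulVec_diagonal]
  exact Finset.sum_congr rfl (fun l _ => by ring)

lemma hankel_rep {n : ℕ} (hn : 0 < n) (H : Matrix (Fin n) (Fin n) ℝ) (hH : H.PosDef)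
    (hHank : IsHankel H) :
    ∃ (lam w : Fin n → ℝ), (∀ l, 0 ≤ w l) ∧
      ∀ i j : Fin n, H i j = ∑ l, w l * lam l ^ ((i : ℕ) + j) := by
  obtain ⟨B, hB, hu⟩ := posDef_factor H hH
  obtain ⟨M, hM⟩ : ∃ M : Matrix (Fin n) (Fin n) ℝ, ∀ i j, M i j =
    if h : (j : ℕ) + 1 < n then H i ⟨j + 1, h⟩ else
      if h : (i : ℕ) + 1 < n then H ⟨i + 1, h⟩ j else 0 := ⟨fun i j => _, fun i j => rfl⟩
  have hMs : Mᵀ = M := by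
    ext i j
    rw [transpose_apply, hM, hM]
    by_cases h1 : (i : ℕ) + 1 < n <;> by_cases h2 : (j : ℕ) + 1 < n
    · rw [dif_pos h1, dif_pos h2]; exact hHank _ _ _ _ (by simp only; omega)
    · rw [dif_pos h1, dif_neg h2, dif_pos h1]; exact hHank _ _ _ _ (by simp only; omega)
    · rw [dif_neg h1, dif_pos h2, dif_pos h2]; exact hHank _ _ _ _ (by simp only; omega)
    · rw [dif_neg h1, dif_neg h2, dif_neg h2, dif_neg h1]
  let A := (B⁻¹)ᵀ * M * B⁻¹
  have hA : A.IsHermitian := by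
    rw [IsHermitian, conjTranspose_eq_transpose_of_trivial]
    simp only [A, transpose_mul, transpose_transpose, hMs, Matrix.mul_assoc]
  let b : Fin n → ℝ := fun i => B i ⟨0, hn⟩
  have hstep : ∀ (k : ℕ) (h : k + 1 < n), A *ᵥ (fun i => B i ⟨k, by omega⟩) = fun i => B i ⟨k+1, h⟩ := by
    intro k h
    have e : A * B = (B⁻¹)ᵀ * M := by
      simp only [A, Matrix.mul_assoc, nonsing_inv_mul _ hu, Matrix.mul_one]
    have e2 : (B⁻¹)ᵀ * H = B := by
      rw [hB, ← Matrix.mul_assoc, ← transpose_mul, mul_nonsing_inv _ hu, transpose_one, Matrix.one_mul]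
    funext i
    have e3 : (A * B) i ⟨k, by omega⟩ = ((B⁻¹)ᵀ * H) i ⟨k+1, h⟩ := by
      rw [e]
      simp only [mul_apply, hM, h, dif_pos]
    rw [e2] at e3
    exact e3
  have hb : ∀ (k : ℕ) (h : k < n), (A ^ k) *ᵥ b = fun i => B i ⟨k, h⟩ := by
    intro k
    induction k with
    | zero => intro h; simp [b]
    | succ k ih =>
      intro h
      rw [pow_succ', ← mulVec_mulVec, ih (by omega), hstep k h]
  obtain ⟨lam, w, hw, hk⟩ := symm_moments A hA b
  refine ⟨lam, w, hw, fun i j => ?_⟩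
  rw [← hk, pow_add, ← mulVec_mulVec, dotProduct_mulVec, ← mulVec_transpose, transpose_pow]
  have hAt : Aᵀ = A := by rw [← conjTranspose_eq_transpose_of_trivial]; exact hA
  rw [hAt, hb i i.2, hb j j.2, hB]
  simp [mul_apply, dotProduct]

lemma exists_pd_hankel (n : ℕ) : ∃ G : Matrix (Fin n) (Fin n) ℝ, G.PosDef ∧ IsHankel G := by
  let V : Matrix (Fin n) (Fin n) ℝ := vandermonde (fun i : Fin n => ((i : ℕ) : ℝ))
  have hV : V.det ≠ 0 := by
    rw [det_vandermonde_ne_zero_iff]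
    intro i j h
    exact Fin.ext (Nat.cast_injective (R := ℝ) h)
  refine ⟨Vᴴ * V, PosDef.conjTranspose_mul_self V ?_, ?_⟩
  · exact mulVec_injective_iff_isUnit.2 ((isUnit_iff_isUnit_det _).2 (isUnit_iff_ne_zero.2 hV))
  · intro i j k l h
    simp only [conjTranspose_eq_transpose_of_trivial, mul_apply, transpose_apply, V, vandermonde_apply,
      ← pow_add, h]

lemma fib_sum {n : ℕ} (f : Fin n → Fin n) (hf : ∀ i j, f i = f j → (i : ℕ) % 4 = (j : ℕ) % 4 → i = j)
    (g : Fin n → ℝ) (hg : ∀ i, 0 ≤ g i) : ∑ i, g (f i) ≤ 4 * ∑ i, g i := by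
  let e : Fin n → Fin n × Fin 4 := fun i => (f i, ⟨(i : ℕ) % 4, Nat.mod_lt _ (by norm_num)⟩)
  have he : Function.Injective e := by
    intro i j h
    simp only [e, Prod.mk.injEq, Fin.mk.injEq] at h
    exact hf i j h.1 h.2
  calc ∑ i, g (f i) = ∑ p ∈ Finset.univ.image e, g p.1 := by
        rw [Finset.sum_image (fun _ _ _ _ h => he h)]
    _ ≤ ∑ p : Fin n × Fin 4, g p.1 :=
        Finset.sum_le_sum_of_subset_of_nonneg (Finset.subset_univ _) (fun p _ _ => hg _)
    _ = _ := by
        rw [Fintype.sum_prod_type, Finset.mul_sum]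
        simp

lemma fib_sum2 {n : ℕ} (f : Fin n → Fin n) (hf : ∀ i j, f i = f j → (i : ℕ) % 4 = (j : ℕ) % 4 → i = j)
    (A : Matrix (Fin n) (Fin n) ℝ) : ∑ i, ∑ j, A (f i) (f j) ^ 2 ≤ 16 * ∑ i, ∑ j, A i j ^ 2 := by
  calc ∑ i, ∑ j, A (f i) (f j) ^ 2 ≤ ∑ i, 4 * ∑ j, A (f i) j ^ 2 :=
        Finset.sum_le_sum (fun i _ => fib_sum f hf (fun j => A (f i) j ^ 2) (fun _ => sq_nonneg _))
    _ = 4 * ∑ i, (fun a => ∑ j, A a j ^ 2) (f i) := by rw [Finset.mul_sum]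
    _ ≤ 4 * (4 * ∑ i, ∑ j, A i j ^ 2) := by
        gcongr
        exact fib_sum f hf _ (fun _ => Finset.sum_nonneg (fun _ _ => sq_nonneg _))
    _ = _ := by ring

lemma nodes (n : ℕ) (hn : 2 ≤ n) (m : ℕ) (ε' K0 : ℝ) (hm : 2 * (1/4:ℝ)^m ≤ ε')
    (hK : Real.exp (-K0 / 2) ≤ ε') :
    ∃ T : Finset ℝ, (T.card : ℝ) ≤ 202 * Real.log n * m ∧
      ∀ x : ℝ, |x| ≤ 1 → ∃ c : ℝ → ℝ, ∑ t ∈ T, |c t| ≤ m ∧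
        ∀ k p : ℕ, K0 ≤ k → k ≤ 2 * n → 4 * p ≤ k →
          |x ^ k - ∑ t ∈ T, c t * t ^ k| ≤ ε' * |x| ^ (2 * p) := by
  obtain ⟨v, hv, hint⟩ := fekete m
  have hn' : (2:ℝ) ≤ n := by exact_mod_cast hn
  have hlog2 : Real.log 2 ≤ Real.log n := Real.log_le_log (by norm_num) hn'
  have hl2 := Real.log_two_gt_d9
  let S : ℕ := ⌊99 * Real.log n⌋₊ + 1
  have hS : (S : ℝ) ≤ 101 * Real.log n := by
    have : (⌊99 * Real.log n⌋₊ : ℝ) ≤ 99 * Real.log n := Nat.floor_le (by linarith)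
    simp only [S]; push_cast; linarith
  let a : ℕ → ℝ := fun s => ((33/32:ℝ)^s - 1) / (2 * n)
  let h : ℕ → ℝ := fun s => (33/32:ℝ)^s / (32 * (2 * n))
  let sg : Bool → ℝ := fun b => if b then 1 else -1
  let nd : Bool × Fin S × Fin m → ℝ := fun q => sg q.1 * Real.exp (-(a q.2.1 + h q.2.1 * v q.2.2))
  let T : Finset ℝ := Finset.univ.image nd
  refine ⟨T, ?_, ?_⟩
  · have h1 : T.card ≤ 2 * (S * m) := by
      refine Finset.card_image_le.trans ?_
      simp
    have h2 : (T.card : ℝ) ≤ 2 * (S * m) := by exact_mod_cast h1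
    have h3 : (S : ℝ) * m ≤ 101 * Real.log n * m := by gcongr
    linarith
  intro x hx
  by_cases hsmall : |x| ≤ Real.exp (-1)
  · refine ⟨fun _ => 0, by simp, fun k p hk _ hp => ?_⟩
    have e1 : x ^ k - ∑ t ∈ T, (0:ℝ) * t ^ k = x ^ k := by simp
    rw [e1, abs_pow]
    have e2 : |x| ^ k = |x| ^ (k - 2 * p) * |x| ^ (2 * p) := by rw [← pow_add]; congr 1; omega
    rw [e2]
    refine mul_le_mul_of_nonneg_right ?_ (by positivity)
    refine le_trans ?_ hK
    refine (pow_le_pow_left₀ (abs_nonneg _) hsmall _).trans ?_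
    rw [← Real.exp_nat_mul, Real.exp_le_exp]
    have : (k : ℝ) ≤ 2 * ((k - 2 * p : ℕ) : ℝ) := by exact_mod_cast (by omega)
    linarith
  · push Not at hsmall
    have hx0 : 0 < |x| := (Real.exp_pos _).trans hsmall
    obtain ⟨u, hu⟩ : ∃ u, u = -Real.log |x| := ⟨_, rfl⟩
    have hxu : |x| = Real.exp (-u) := by rw [hu, neg_neg, Real.exp_log hx0]
    have hu0 : 0 ≤ u := by
      rw [hu]; have := Real.log_nonpos hx0.le hx; linarith
    have hu1 : u ≤ 1 := by
      rw [hxu, Real.exp_lt_exp] at hsmall; linarith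
    obtain ⟨s, hs1, hs2⟩ := exists_nat_pow_near (x := 1 + 2 * n * u) (y := (33/32:ℝ))
      (by nlinarith) (by norm_num)
    have hsS : s < S := by
      have h1 : (33/32:ℝ)^s ≤ (n:ℝ)^3 := by
        refine hs1.trans ?_
        have : 1 + 2 * n * u ≤ 1 + 2 * (n:ℝ) := by nlinarith
        refine this.trans ?_
        nlinarith [mul_self_nonneg ((n:ℝ) - 2), mul_nonneg (by linarith : (0:ℝ) ≤ n) (mul_self_nonneg ((n:ℝ) - 2))]
      have h2 := Real.log_le_log (by positivity) h1
      rw [Real.log_pow, Real.log_pow] at h2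
      have h3 : (1:ℝ)/33 ≤ Real.log (33/32) := by
        have := Real.one_sub_inv_le_log_of_pos (x := (33/32:ℝ)) (by norm_num)
        norm_num at this ⊢; linarith
      have h4 : (s:ℝ) * (1/33) ≤ s * Real.log (33/32) := by gcongr
      have h5 : (s : ℝ) ≤ 99 * Real.log n := by push_cast at h2; linarith
      have := Nat.le_floor h5
      simp only [S]; omega
    have hh : 0 < h s := by simp only [h]; positivity
    have ha : 0 ≤ a s := by
      simp only [a]
      have : (1:ℝ) ≤ (33/32)^s := one_le_pow₀ (by norm_num)
      exact div_nonneg (by linarith) (by positivity)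
    have hsum : ∃ y, 0 ≤ y ∧ y ≤ 1 ∧ u = a s + h s * y := by
      refine ⟨(u - a s) / h s, ?_, ?_, ?_⟩
      · refine div_nonneg ?_ hh.le
        have : a s ≤ u := by
          simp only [a]; rw [div_le_iff₀ (by positivity)]; linarith
        linarith
      · rw [div_le_one hh]
        have : u ≤ a s + h s := by
          have : a s + h s = ((33/32:ℝ)^(s+1) - 1) / (2 * n) := by
            simp only [a, h]; rw [pow_succ]; field_simp; ring
          rw [this, le_div_iff₀ (by positivity)]; linarith
        linarith
      · field_simp; ring
    obtain ⟨y, hy0, hy1, hy⟩ := hsum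
    obtain ⟨l, hl, hli⟩ := hint y hy0 hy1
    obtain ⟨b, hb⟩ : ∃ b, x = sg b * |x| := by
      rcases le_total 0 x with h0 | h0
      · exact ⟨true, by simp [sg, abs_of_nonneg h0]⟩
      · exact ⟨false, by simp [sg, abs_of_nonpos h0]⟩
    let N : Fin m → ℝ := fun j => nd (b, ⟨s, hsS⟩, j)
    have hNT : ∀ j, N j ∈ T := fun j => Finset.mem_image_of_mem _ (Finset.mem_univ _)
    refine ⟨fun t => ∑ j, if N j = t then l j else 0, ?_, ?_⟩
    · calc ∑ t ∈ T, |∑ j, if N j = t then l j else 0|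
          ≤ ∑ t ∈ T, ∑ j, if N j = t then (1:ℝ) else 0 := by
            refine Finset.sum_le_sum (fun t _ => (Finset.abs_sum_le_sum_abs _ _).trans ?_)
            refine Finset.sum_le_sum (fun j _ => ?_)
            split_ifs
            · exact hl j
            · simp
        _ = ∑ j : Fin m, (1:ℝ) := by
            rw [Finset.sum_comm]
            refine Finset.sum_congr rfl (fun j _ => ?_)
            rw [Finset.sum_ite_eq, if_pos (hNT j)]
        _ ≤ m := by simp
    · intro k p hk hkn hp
      have e1 : ∑ t ∈ T, (∑ j, if N j = t then l j else 0) * t ^ k = ∑ j, l j * N j ^ k := by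
        simp only [Finset.sum_mul, ite_mul, zero_mul]
        rw [Finset.sum_comm]
        refine Finset.sum_congr rfl (fun j _ => ?_)
        rw [Finset.sum_ite_eq, if_pos (hNT j)]
      have hsgk : |sg b ^ k| = 1 := by
        rw [abs_pow]; cases b <;> simp [sg]
      have e2 : x ^ k = sg b ^ k * Real.exp (-(k * a s + k * h s * y)) := by
        rw [hb, mul_pow, hxu, ← Real.exp_nat_mul, hy]; congr 2; ring
      have e3 : ∀ j, N j ^ k = sg b ^ k * Real.exp (-(k * a s + k * h s * v j)) := by
        intro j
        simp only [N, nd]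
        rw [mul_pow, ← Real.exp_nat_mul]; congr 2; ring
      beta_reduce
      have e4 : x ^ k - ∑ j, l j * N j ^ k = sg b ^ k * (Real.exp (-(k * a s + k * h s * y))
          - ∑ j, l j * Real.exp (-(k * a s + k * h s * v j))) := by
        rw [e2, mul_sub, Finset.mul_sum]
        congr 1
        refine Finset.sum_congr rfl (fun j _ => ?_)
        rw [e3]; ring
      rw [e1, e4, abs_mul, hsgk, one_mul]
      refine (approx_scale m v l hv y hy0 hy1 hl hli (k * a s) (k * h s) (by positivity)
        (by positivity) ?_).trans ?_
      · have hkn' : (k:ℝ) ≤ 2 * n := by exact_mod_cast hkn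
        have : (k:ℝ) * h s = k * a s / 32 + (k / (2 * n)) / 32 := by
          simp only [h, a]; field_simp; ring
        have h2 : (k:ℝ) / (2 * n) ≤ 1 := by rw [div_le_one (by positivity)]; exact hkn'
        linarith
      · refine mul_le_mul hm ?_ (Real.exp_pos _).le ((by positivity : (0:ℝ) ≤ 2 * (1/4)^m).trans hm)
        rw [hxu, ← Real.exp_nat_mul, Real.exp_le_exp]
        have : (4:ℝ) * p ≤ k := by exact_mod_cast hp
        push_cast
        have e5 : -(k * a s + k * h s * y) / 2 = - (k * u) / 2 := by rw [hy]; ring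
        rw [e5]
        nlinarith
end

lemma core_pd (n : ℕ) (hn : 2 ≤ n) (m : ℕ) (ε' K0 : ℝ) (hε : 0 ≤ ε') (T : Finset ℝ)
    (hT : ∀ x : ℝ, |x| ≤ 1 → ∃ c : ℝ → ℝ, ∑ t ∈ T, |c t| ≤ m ∧
        ∀ k p : ℕ, K0 ≤ k → k ≤ 2 * n → 4 * p ≤ k →
          |x ^ k - ∑ t ∈ T, c t * t ^ k| ≤ ε' * |x| ^ (2 * p))
    (H : Matrix (Fin n) (Fin n) ℝ) (hH : H.PosDef) (hHank : IsHankel H)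
    (f g : Fin n → Fin n) (hf : ∀ i, (f i : ℕ) = 2 * ((i : ℕ) / 4))
    (hg : ∀ i, (g i : ℕ) = n - 1 - 2 * ((n - 1 - (i : ℕ)) / 4)) :
    ∃ d : (T ⊕ T : Type) → ℝ,
      (∑ i, |d i|) ≤ m * (H ⟨0, by omega⟩ ⟨0, by omega⟩ + H ⟨n - 1, by omega⟩ ⟨n - 1, by omega⟩) ∧
      ∀ i j : Fin n, K0 ≤ ((i : ℕ) + (j : ℕ) : ℝ) →
        ((i : ℕ) + (j : ℕ) : ℝ) ≤ 2 * ((n : ℝ) - 1) - K0 →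
        |(bigV n T * Matrix.diagonal d * (bigV n T).transpose) i j - H i j| ≤
          ε' * (H (f i) (f j) + H (g i) (g j)) := by
  obtain ⟨lam, w, hw, hrep⟩ := hankel_rep (by omega) H hH hHank
  let x : Fin n → ℝ := fun l => if |lam l| ≤ 1 then lam l else (lam l)⁻¹
  let wl : Fin n → ℝ := fun l => if |lam l| ≤ 1 then w l else 0
  let wr : Fin n → ℝ := fun l => if |lam l| ≤ 1 then 0 else w l * lam l ^ (2 * (n - 1))
  have hx : ∀ l, |x l| ≤ 1 := by
    intro l
    simp only [x]
    split_ifs with h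
    · exact h
    · rw [abs_inv]; exact inv_le_one_of_one_le₀ (by linarith)
  have hwl : ∀ l, 0 ≤ wl l := by
    intro l; simp only [wl]; split_ifs; exacts [hw l, le_rfl]
  have hwr : ∀ l, 0 ≤ wr l := by
    intro l; simp only [wr]; split_ifs
    · exact le_rfl
    · exact mul_nonneg (hw l) (by rw [pow_mul]; positivity)
  have hsplit : ∀ i j : Fin n, ∀ l, w l * lam l ^ ((i:ℕ) + j) =
      wl l * x l ^ ((i:ℕ) + j) + wr l * x l ^ ((n - 1 - (i:ℕ)) + (n - 1 - (j:ℕ))) := by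
    intro i j l
    simp only [wl, wr, x]
    split_ifs with h
    · ring
    · have h0 : lam l ≠ 0 := by intro h0; simp [h0] at h
      have e : 2 * (n - 1) = ((i:ℕ) + j) + ((n - 1 - (i:ℕ)) + (n - 1 - (j:ℕ))) := by omega
      rw [e, pow_add _ ((i:ℕ) + j), zero_mul, zero_add, inv_pow, ← mul_assoc,
        mul_inv_cancel_right₀ (pow_ne_zero _ h0)]
  have hHs : ∀ i j : Fin n, H i j = ∑ l, wl l * x l ^ ((i:ℕ) + j) +
      ∑ l, wr l * x l ^ ((n - 1 - (i:ℕ)) + (n - 1 - (j:ℕ))) := by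
    intro i j
    rw [hrep, ← Finset.sum_add_distrib]
    exact Finset.sum_congr rfl (fun l _ => hsplit i j l)
  choose c hc1 hc2 using fun l => hT (x l) (hx l)
  let dl : ℝ → ℝ := fun t => ∑ l, wl l * c l t
  let dr : ℝ → ℝ := fun t => ∑ l, wr l * c l t
  -- generic bounds
  have habs : ∀ W : Fin n → ℝ, (∀ l, 0 ≤ W l) →
      ∑ t : T, |∑ l, W l * c l t| ≤ m * ∑ l, W l := by
    intro W hW
    rw [Finset.sum_coe_sort T (fun t => |∑ l, W l * c l t|)]
    calc ∑ t ∈ T, |∑ l, W l * c l t| ≤ ∑ t ∈ T, ∑ l, W l * |c l t| := by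
          refine Finset.sum_le_sum (fun t _ => (Finset.abs_sum_le_sum_abs _ _).trans ?_)
          refine Finset.sum_le_sum (fun l _ => ?_)
          rw [abs_mul, abs_of_nonneg (hW l)]
      _ = ∑ l, W l * ∑ t ∈ T, |c l t| := by
          rw [Finset.sum_comm]
          exact Finset.sum_congr rfl (fun l _ => by rw [Finset.mul_sum])
      _ ≤ ∑ l, W l * m := Finset.sum_le_sum (fun l _ => mul_le_mul_of_nonneg_left (hc1 l) (hW l))
      _ = _ := by rw [← Finset.sum_mul, mul_comm]
  have herr : ∀ W : Fin n → ℝ, (∀ l, 0 ≤ W l) → ∀ k p : ℕ, K0 ≤ k → k ≤ 2 * n → 4 * p ≤ k →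
      |∑ t : T, (∑ l, W l * c l t) * (t:ℝ) ^ k - ∑ l, W l * x l ^ k|
        ≤ ε' * ∑ l, W l * x l ^ (2 * p) := by
    intro W hW k p h1 h2 h3
    rw [Finset.sum_coe_sort T (fun t => (∑ l, W l * c l t) * t ^ k)]
    have e : ∑ t ∈ T, (∑ l, W l * c l t) * t ^ k - ∑ l, W l * x l ^ k
        = - ∑ l, W l * (x l ^ k - ∑ t ∈ T, c l t * t ^ k) := by
      simp only [mul_sub, Finset.sum_sub_distrib, Finset.mul_sum, Finset.sum_mul]
      rw [Finset.sum_comm, neg_sub]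
      congr 1
      exact Finset.sum_congr rfl (fun l _ => Finset.sum_congr rfl (fun t _ => by ring))
    rw [e, abs_neg, Finset.mul_sum]
    refine (Finset.abs_sum_le_sum_abs _ _).trans (Finset.sum_le_sum (fun l _ => ?_))
    rw [abs_mul, abs_of_nonneg (hW l)]
    have := mul_le_mul_of_nonneg_left (hc2 l k p h1 h2 h3) (hW l)
    rw [pow_mul, sq_abs, ← pow_mul] at this
    linarith
  have hev : ∀ W : Fin n → ℝ, (∀ l, 0 ≤ W l) → ∀ p : ℕ, 0 ≤ ∑ l, W l * x l ^ (2 * p) := by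
    intro W hW p
    refine Finset.sum_nonneg (fun l _ => mul_nonneg (hW l) (by rw [pow_mul]; positivity))
  refine ⟨Sum.elim (fun t => dl t) (fun t => dr t), ?_, ?_⟩
  · rw [Fintype.sum_sum_type]
    simp only [Sum.elim_inl, Sum.elim_inr]
    have h1 := habs wl hwl
    have h2 := habs wr hwr
    have h3 : ∑ l, wl l ≤ H ⟨0, by omega⟩ ⟨0, by omega⟩ := by
      rw [hHs]
      have := hev wr hwr (n - 1)
      simp only [Nat.sub_zero, ← two_mul]
      simpa using this
    have h4 : ∑ l, wr l ≤ H ⟨n - 1, by omega⟩ ⟨n - 1, by omega⟩ := by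
      rw [hHs]
      have := hev wl hwl (n - 1)
      simp only [← two_mul]
      simpa using this
    calc _ ≤ (m:ℝ) * ∑ l, wl l + m * ∑ l, wr l := add_le_add h1 h2
      _ = m * (∑ l, wl l + ∑ l, wr l) := by ring
      _ ≤ _ := by gcongr
  · intro i j hij1 hij2
    have hV : (bigV n T * Matrix.diagonal (Sum.elim (fun t : T => dl t) (fun t : T => dr t)) *
        (bigV n T).transpose) i j = ∑ t : T, dl t * (t:ℝ) ^ ((i:ℕ) + j) +
          ∑ t : T, dr t * (t:ℝ) ^ ((n - 1 - (i:ℕ)) + (n - 1 - (j:ℕ))) := by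
      rw [Matrix.mul_apply]
      simp only [Matrix.mul_diagonal, Matrix.transpose_apply, bigV, Matrix.of_apply,
        Fintype.sum_sum_type, Sum.elim_inl, Sum.elim_inr]
      congr 1 <;> exact Finset.sum_congr rfl (fun t _ => by rw [pow_add]; ring)
    have hi := i.2
    have hj := j.2
    have hin : (((n - 1 - (i:ℕ)) + (n - 1 - (j:ℕ)) : ℕ) : ℝ) = 2 * ((n : ℝ) - 1) - (i + j) := by
      have : (n - 1 - (i:ℕ)) + (n - 1 - (j:ℕ)) + 2 + i + j = 2 * n := by omega
      have h2 : (((n - 1 - (i:ℕ)) + (n - 1 - (j:ℕ)) : ℕ) : ℝ) + 2 + i + j = 2 * n := by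
        exact_mod_cast this
      linarith
    have h1 := herr wl hwl ((i:ℕ) + j) ((i:ℕ) / 4 + (j:ℕ) / 4) (by push_cast; exact hij1) (by omega) (by omega)
    have h2 := herr wr hwr ((n - 1 - (i:ℕ)) + (n - 1 - (j:ℕ)))
      ((n - 1 - (i:ℕ)) / 4 + (n - 1 - (j:ℕ)) / 4) (by rw [hin]; linarith) (by omega) (by omega)
    have h3 : ∑ l, wl l * x l ^ (2 * ((i:ℕ) / 4 + (j:ℕ) / 4)) ≤ H (f i) (f j) := by
      rw [hHs, hf, hf]
      have := hev wr hwr ((n - 1 - (2 * ((i:ℕ)/4) + 2 * ((j:ℕ)/4)) / 2) +  0)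
      have e : (n - 1 - 2 * ((i:ℕ) / 4)) + (n - 1 - 2 * ((j:ℕ) / 4)) =
        2 * ((n - 1 - (2 * ((i:ℕ)/4) + 2 * ((j:ℕ)/4)) / 2) + 0) := by omega
      rw [e, mul_add]
      linarith
    have h4 : ∑ l, wr l * x l ^ (2 * ((n - 1 - (i:ℕ)) / 4 + (n - 1 - (j:ℕ)) / 4)) ≤ H (g i) (g j) := by
      rw [hHs, hg, hg]
      have := hev wl hwl (n - 1 - (n - 1 - (i:ℕ)) / 4 - (n - 1 - (j:ℕ)) / 4)
      have e : n - 1 - 2 * ((n - 1 - (i:ℕ)) / 4) + (n - 1 - 2 * ((n - 1 - (j:ℕ)) / 4)) =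
        2 * (n - 1 - (n - 1 - (i:ℕ)) / 4 - (n - 1 - (j:ℕ)) / 4) := by omega
      have e2 : n - 1 - (n - 1 - 2 * ((n - 1 - (i:ℕ)) / 4)) + (n - 1 - (n - 1 - 2 * ((n - 1 - (j:ℕ)) / 4)))
        = 2 * ((n - 1 - (i:ℕ)) / 4 + (n - 1 - (j:ℕ)) / 4) := by omega
      rw [e, e2]
      linarith
    rw [hV, hHs i j]
    have h5 := mul_le_mul_of_nonneg_left h3 hε
    have h6 := mul_le_mul_of_nonneg_left h4 hε
    rw [add_sub_add_comm]
    refine (abs_add_le _ _).trans ?_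
    rw [mul_add]
    exact add_le_add (h1.trans h5) (h2.trans h6)

lemma bigV_hankel (n : ℕ) (T : Finset ℝ) (d : (T ⊕ T : Type) → ℝ) :
    IsHankel (bigV n T * Matrix.diagonal d * (bigV n T).transpose) := by
  intro i j k l h
  rw [Matrix.mul_apply, Matrix.mul_apply]
  simp only [Matrix.mul_diagonal, Matrix.transpose_apply, bigV, Matrix.of_apply,
    Fintype.sum_sum_type, Sum.elim_inl, Sum.elim_inr]
  have e : (n - 1 - (i:ℕ)) + (n - 1 - (j:ℕ)) = (n - 1 - (k:ℕ)) + (n - 1 - (l:ℕ)) := by omega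
  congr 1
  · refine Finset.sum_congr rfl (fun t _ => ?_)
    rw [mul_right_comm, mul_right_comm _ (d _), ← pow_add, ← pow_add, h]
  · refine Finset.sum_congr rfl (fun t _ => ?_)
    rw [mul_right_comm, mul_right_comm _ (d _), ← pow_add, ← pow_add, e]

lemma entry_le_fro {n : ℕ} (A : Matrix (Fin n) (Fin n) ℝ) (i j : Fin n) : A i j ≤ froNorm A := by
  refine Real.le_sqrt_of_sq_le ?_
  refine (Finset.single_le_sum (f := fun j => A i j ^ 2) (fun _ _ => sq_nonneg _) (Finset.mem_univ j)).trans ?_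
  exact Finset.single_le_sum (f := fun i => ∑ j, A i j ^ 2)
    (fun _ _ => Finset.sum_nonneg (fun _ _ => sq_nonneg _)) (Finset.mem_univ i)

/-- A universal node set `T` (depending only on `n` and `ε`) such that every
PSD Hankel matrix `H` is approximated by `V D* Vᵀ + H*` with `D*` diagonal of bounded trace
norm and `H*` a Hankel matrix supported on the first and last `O(ln(1/ε))` anti-diagonals. -/
theorem universal_vandermonde_approx :
    ∃ C C' : ℝ, 0 < C ∧ 0 < C' ∧
      ∀ (n : ℕ), 2 ≤ n → ∀ ε : ℝ, 0 < ε → ε < 1 / 2 →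
        ∃ T : Finset ℝ, (T.card : ℝ) ≤ C * Real.log n * Real.log (1 / ε) ∧
          ∀ H : Matrix (Fin n) (Fin n) ℝ, H.PosSemidef → IsHankel H →
            ∃ (d : (T ⊕ T : Type) → ℝ) (Hstar : Matrix (Fin n) (Fin n) ℝ),
              IsHankel Hstar ∧
              (∀ i j : Fin n,
                C' * Real.log (1 / ε) ≤ ((i : ℕ) + (j : ℕ) : ℝ) →
                ((i : ℕ) + (j : ℕ) : ℝ) ≤ 2 * ((n : ℝ) - 1) - C' * Real.log (1 / ε) →
                Hstar i j = 0) ∧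
              froNorm (bigV n T * Matrix.diagonal d * (bigV n T).transpose + Hstar - H) ≤
                ε * froNorm H ∧
              (∑ i, |d i|) ≤ C * Real.log (1 / ε) * Real.log n * froNorm H := by
  refine ⟨2000, 12, by norm_num, by norm_num, fun n hn ε hε0 hε1 => ?_⟩
  obtain ⟨L, hL⟩ : ∃ L, L = Real.log (1 / ε) := ⟨_, rfl⟩
  rw [← hL]
  have hl2 := Real.log_two_gt_d9
  have hL2 : Real.log 2 ≤ L := by
    rw [hL]
    refine Real.log_le_log (by norm_num) ?_
    rw [le_div_iff₀ hε0]; linarith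
  have hεL : ε = Real.exp (-L) := by
    rw [hL, one_div, Real.log_inv, neg_neg, Real.exp_log hε0]
  have hn' : (2:ℝ) ≤ n := by exact_mod_cast hn
  have hlogn : Real.log 2 ≤ Real.log n := Real.log_le_log (by norm_num) hn'
  have h64 : Real.exp (-(7 * L)) ≤ ε / 64 := by
    have h1 : Real.exp (-(6 * L)) ≤ 1/64 := by
      have : (1/64:ℝ) = Real.exp (-(6 * Real.log 2)) := by
        rw [Real.exp_neg, show 6 * Real.log 2 = ((6:ℕ):ℝ) * Real.log 2 by norm_num, Real.exp_nat_mul,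
          Real.exp_log (by norm_num)]
        norm_num
      rw [this, Real.exp_le_exp]; linarith
    have : Real.exp (-(7 * L)) = ε * Real.exp (-(6 * L)) := by
      rw [hεL, ← Real.exp_add]; congr 1; ring
    rw [this]
    nlinarith
  let m : ℕ := ⌈7 * L⌉₊
  have hm1 : 7 * L ≤ m := Nat.le_ceil _
  have hm2 : (m : ℝ) ≤ 9 * L := by
    have := Nat.ceil_lt_add_one (a := 7 * L) (by linarith)
    simp only [m]; linarith
  have hm : 2 * (1/4:ℝ)^m ≤ ε / 32 := by
    have h1 : (1/4:ℝ)^m ≤ Real.exp (-1) ^ m := by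
      gcongr
      rw [Real.exp_neg, one_div]
      gcongr
      have := Real.exp_one_lt_d9; linarith
    have h2 : Real.exp (-1) ^ m ≤ Real.exp (-(7 * L)) := by
      rw [← Real.exp_nat_mul, Real.exp_le_exp]; linarith
    linarith
  have hK : Real.exp (-(12 * L) / 2) ≤ ε / 32 := by
    have : Real.exp (-(5 * L)) ≤ 1/32 := by
      have : (1/32:ℝ) = Real.exp (-(5 * Real.log 2)) := by
        rw [Real.exp_neg, show 5 * Real.log 2 = ((5:ℕ):ℝ) * Real.log 2 by norm_num, Real.exp_nat_mul,
          Real.exp_log (by norm_num)]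
        norm_num
      rw [this, Real.exp_le_exp]; linarith
    have h2 : Real.exp (-(12 * L) / 2) = ε * Real.exp (-(5 * L)) := by
      rw [hεL, ← Real.exp_add]; congr 1; ring
    rw [h2]
    nlinarith
  obtain ⟨T, hTc, hT⟩ := nodes n hn m (ε / 32) (12 * L) hm hK
  refine ⟨T, ?_, ?_⟩
  · have : 202 * Real.log n * m ≤ 202 * Real.log n * (9 * L) := by
      have : 0 ≤ 202 * Real.log n := by linarith
      gcongr
    have h0 : 0 ≤ Real.log n * L := mul_nonneg (by linarith) (by linarith)
    nlinarith
  intro H hH hHank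
  -- zero region
  obtain ⟨G, hG, hGH⟩ := exists_pd_hankel n
  let SS : Matrix (Fin n) (Fin n) ℝ → ℝ := fun A => ∑ i, ∑ j, A i j ^ 2
  have hSS0 : ∀ A, 0 ≤ SS A := fun A =>
    Finset.sum_nonneg (fun _ _ => Finset.sum_nonneg (fun _ _ => sq_nonneg _))
  have hfro : ∀ A, froNorm A = Real.sqrt (SS A) := fun A => rfl
  by_cases hz : SS H = 0
  · have hH0 : H = 0 := by
      ext i j
      have h1 := (Finset.sum_eq_zero_iff_of_nonneg
        (fun i _ => Finset.sum_nonneg (fun j _ => sq_nonneg (H i j)))).1 hz i (Finset.mem_univ _)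
      have h2 := (Finset.sum_eq_zero_iff_of_nonneg (fun j _ => sq_nonneg (H i j))).1 h1 j (Finset.mem_univ _)
      simpa using h2
    refine ⟨0, 0, fun _ _ _ _ _ => rfl, fun _ _ _ _ => rfl, ?_, ?_⟩
    · subst hH0; simp [froNorm]
    · subst hH0; simp [froNorm]
  have hHpos : 0 < SS H := lt_of_le_of_ne (hSS0 H) (Ne.symm hz)
  obtain ⟨η, hη0, hη⟩ : ∃ η : ℝ, 0 < η ∧ η ^ 2 * SS G ≤ ε ^ 2 / 16 * SS H := by
    have hq : 0 < ε ^ 2 / 16 * SS H / (SS G + 1) := by have := hSS0 G; positivity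
    refine ⟨Real.sqrt (ε ^ 2 / 16 * SS H / (SS G + 1)), Real.sqrt_pos.2 hq, ?_⟩
    rw [Real.sq_sqrt hq.le, div_mul_eq_mul_div, div_le_iff₀ (by have := hSS0 G; positivity)]
    gcongr
    linarith
  let H' : Matrix (Fin n) (Fin n) ℝ := H + η • G
  have hH'pd : H'.PosDef := Matrix.PosDef.posSemidef_add hH (hG.smul hη0)
  have hH'H : IsHankel H' := by
    intro i j k l h
    simp only [H', Matrix.add_apply, Matrix.smul_apply, hHank i j k l h, hGH i j k l h]
  have hSS' : SS H' ≤ 2 * SS H + 2 * (η ^ 2 * SS G) := by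
    simp only [SS, Finset.mul_sum, ← Finset.sum_add_distrib]
    refine Finset.sum_le_sum (fun i _ => Finset.sum_le_sum (fun j _ => ?_))
    simp only [H', Matrix.add_apply, Matrix.smul_apply, smul_eq_mul]
    nlinarith [sq_nonneg (H i j - η * G i j)]
  let f : Fin n → Fin n := fun i => ⟨2 * ((i : ℕ) / 4), by omega⟩
  let g : Fin n → Fin n := fun i => ⟨n - 1 - 2 * ((n - 1 - (i : ℕ)) / 4), by omega⟩
  have hfi : ∀ i j, f i = f j → (i : ℕ) % 4 = (j : ℕ) % 4 → i = j := by
    intro i j h1 h2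
    simp only [f, Fin.mk.injEq] at h1
    exact Fin.ext (by omega)
  have hgi : ∀ i j, g i = g j → (i : ℕ) % 4 = (j : ℕ) % 4 → i = j := by
    intro i j h1 h2
    simp only [g, Fin.mk.injEq] at h1
    exact Fin.ext (by omega)
  obtain ⟨d, hd, hE⟩ := core_pd n hn m (ε / 32) (12 * L) (by positivity) T hT H' hH'pd hH'H f g
    (fun _ => rfl) (fun _ => rfl)
  let V := bigV n T * Matrix.diagonal d * (bigV n T).transpose
  have hVH : IsHankel V := bigV_hankel n T d
  refine ⟨d, Matrix.of fun i j => if 12 * L ≤ ((i : ℕ) + (j : ℕ) : ℝ) ∧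
    ((i : ℕ) + (j : ℕ) : ℝ) ≤ 2 * ((n : ℝ) - 1) - 12 * L then 0 else H i j - V i j, ?_, ?_, ?_, ?_⟩
  · intro i j k l h
    have h' : ((i : ℕ) + (j : ℕ) : ℝ) = ((k : ℕ) + (l : ℕ) : ℝ) := by exact_mod_cast h
    simp only [Matrix.of_apply, h', hHank i j k l h, hVH i j k l h]
  · intro i j h1 h2
    simp only [Matrix.of_apply]
    rw [if_pos ⟨h1, h2⟩]
  · have hptw : ∀ i j : Fin n, (V + (Matrix.of fun i j : Fin n => if 12 * L ≤ ((i : ℕ) + (j : ℕ) : ℝ) ∧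
        ((i : ℕ) + (j : ℕ) : ℝ) ≤ 2 * ((n : ℝ) - 1) - 12 * L then 0 else H i j - V i j) - H) i j ^ 2 ≤
        4 * (ε / 32) ^ 2 * H' (f i) (f j) ^ 2 + 4 * (ε / 32) ^ 2 * H' (g i) (g j) ^ 2
          + 2 * η ^ 2 * G i j ^ 2 := by
      intro i j
      simp only [Matrix.sub_apply, Matrix.add_apply, Matrix.of_apply]
      split_ifs with hc
      · have hb := hE i j hc.1 hc.2
        have hb2 := sq_le_sq' (by linarith [(abs_le.1 hb).1]) (abs_le.1 hb).2
        have e : V i j + 0 - H i j = (V i j - H' i j) + η * G i j := by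
          simp only [H', Matrix.add_apply, Matrix.smul_apply, smul_eq_mul]; ring
        rw [e]
        have i1 : ((V i j - H' i j) + η * G i j) ^ 2 ≤ 2 * (V i j - H' i j) ^ 2 + 2 * (η * G i j) ^ 2 := by
          nlinarith [sq_nonneg ((V i j - H' i j) - η * G i j)]
        have i2 : (H' (f i) (f j) + H' (g i) (g j)) ^ 2 ≤ 2 * H' (f i) (f j) ^ 2 + 2 * H' (g i) (g j) ^ 2 := by
          nlinarith [sq_nonneg (H' (f i) (f j) - H' (g i) (g j))]
        have i3 := mul_le_mul_of_nonneg_left i2 (sq_nonneg (ε / 32))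
        rw [mul_pow] at hb2
        have hb3 : (V i j - H' i j) ^ 2 ≤ (ε / 32) ^ 2 * (H' (f i) (f j) + H' (g i) (g j)) ^ 2 := hb2
        rw [mul_pow] at i1
        linarith
      · have e : V i j + (H i j - V i j) - H i j = 0 := by ring
        rw [e, zero_pow two_ne_zero]
        positivity
    have hsum : SS (V + (Matrix.of fun i j : Fin n => if 12 * L ≤ ((i : ℕ) + (j : ℕ) : ℝ) ∧
        ((i : ℕ) + (j : ℕ) : ℝ) ≤ 2 * ((n : ℝ) - 1) - 12 * L then 0 else H i j - V i j) - H) ≤ ε ^ 2 * SS H := by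
      have h1 := fib_sum2 f hfi H'
      have h2 := fib_sum2 g hgi H'
      have h3 := Finset.sum_le_sum (s := Finset.univ) (fun i _ => Finset.sum_le_sum (s := Finset.univ)
        (fun j _ => hptw i j))
      simp only [Finset.sum_add_distrib, ← Finset.mul_sum] at h3
      refine h3.trans ?_
      have q1 := mul_le_mul_of_nonneg_left h1 (by positivity : 0 ≤ 4 * (ε / 32) ^ 2)
      have q2 := mul_le_mul_of_nonneg_left h2 (by positivity : 0 ≤ 4 * (ε / 32) ^ 2)
      have q3 := mul_le_mul_of_nonneg_left hSS' (by positivity : 0 ≤ ε ^ 2 / 8)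
      have q4 : ε ^ 2 ≤ 1 := by nlinarith
      have q5 : ε ^ 2 * (η ^ 2 * SS G) ≤ 1 * (η ^ 2 * SS G) :=
        mul_le_mul_of_nonneg_right q4 (mul_nonneg (sq_nonneg _) (hSS0 G))
      have q6 : 0 ≤ ε ^ 2 * SS H := by positivity
      change _ + 2 * η ^ 2 * SS G ≤ _
      change _ ≤ 4 * (ε / 32) ^ 2 * (16 * SS H') at q1
      change _ ≤ 4 * (ε / 32) ^ 2 * (16 * SS H') at q2
      linarith
    rw [hfro, hfro]
    calc _ ≤ Real.sqrt (ε ^ 2 * SS H) := Real.sqrt_le_sqrt hsum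
      _ = _ := by rw [Real.sqrt_mul (sq_nonneg _), Real.sqrt_sq hε0.le]
  · have hfl : froNorm H' ≤ 2 * froNorm H := by
      rw [hfro, hfro]
      calc _ ≤ Real.sqrt (2 ^ 2 * SS H) := Real.sqrt_le_sqrt (by
              have : ε ^ 2 / 16 * SS H ≤ 1 * SS H := by
                refine mul_le_mul_of_nonneg_right ?_ hHpos.le
                nlinarith
              linarith)
        _ = _ := by rw [Real.sqrt_mul (sq_nonneg _), Real.sqrt_sq (by norm_num)]
    have hF0 : 0 ≤ froNorm H := Real.sqrt_nonneg _
    have h1 := entry_le_fro H' ⟨0, by omega⟩ ⟨0, by omega⟩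
    have h2 := entry_le_fro H' ⟨n - 1, by omega⟩ ⟨n - 1, by omega⟩
    calc _ ≤ _ := hd
      _ ≤ (m : ℝ) * (4 * froNorm H) := by gcongr; linarith
      _ ≤ 9 * L * (4 * froNorm H) := by gcongr
      _ = 36 * L * 1 * froNorm H := by ring
      _ ≤ 36 * L * (2 * Real.log n) * froNorm H := by
          have : 0 ≤ 36 * L := by linarith
          gcongr
          linarith
      _ ≤ 2000 * L * Real.log n * froNorm H := by
          have : 0 ≤ L * Real.log n * froNorm H :=
            mul_nonneg (mul_nonneg (by linarith) (by linarith)) hF0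
          nlinarith
end
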